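/- arXiv:1503.02429 — 3 statements merged into one kernel-verified Lean document; each statement's English description precedes it below -/
import Mathlib

section
/- Let λ > 0, a ∈ ℝ, and ψ(x) = λ|x|²/4 − a·ln|x| on ℝ²∖{0}. Suppose γ: ℝ × [0,T) → ℝ²∖{0} evolves by ψMCF, and for every t the closed curve γ(·,t) has turning number 1; let A(t) be its signed area and w(t) its winding number about the origin. Then A′(t) = −2π − λA(t) + 2πa·w(t). In particular, if w(t) = 0 for all t and A(0) = A₀ > 0, then A(t) = (A₀ + 2π/λ)e^{−λt} − 2π/λ, which vanishes exactly at t = (1/λ)·ln(1 + λA₀/(2π)). -/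
noncomputable section
open Real Set

def dot2 (v w : ℝ × ℝ) : ℝ := v.1 * w.1 + v.2 * w.2

def nrm2 (v : ℝ × ℝ) : ℝ := Real.sqrt (v.1 ^ 2 + v.2 ^ 2)

def Jrot (v : ℝ × ℝ) : ℝ × ℝ := (-v.2, v.1)

structure IsClosedCurve (γ : ℝ → ℝ × ℝ) : Prop where
  smooth : ContDiff ℝ (⊤ : ℕ∞) γ
  periodic : Function.Periodic γ (2 * π)
  regular : ∀ u, deriv γ u ≠ 0

def tangentC (γ : ℝ → ℝ × ℝ) (u : ℝ) : ℝ × ℝ := (nrm2 (deriv γ u))⁻¹ • deriv γ u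

def normalC (γ : ℝ → ℝ × ℝ) (u : ℝ) : ℝ × ℝ := Jrot (tangentC γ u)

def arcDeriv {F : Type*} [NormedAddCommGroup F] [NormedSpace ℝ F]
    (γ : ℝ → ℝ × ℝ) (h : ℝ → F) (u : ℝ) : F :=
  (nrm2 (deriv γ u))⁻¹ • deriv h u

def curvature (γ : ℝ → ℝ × ℝ) (u : ℝ) : ℝ :=
  dot2 (arcDeriv γ (tangentC γ) u) (normalC γ u)

def psiCurv (ψ : ℝ × ℝ → ℝ) (γ : ℝ → ℝ × ℝ) (u : ℝ) : ℝ :=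
  curvature γ u - fderiv ℝ ψ (γ u) (normalC γ u)

def IsPsiMinimal (ψ : ℝ × ℝ → ℝ) (γ : ℝ → ℝ × ℝ) : Prop :=
  ∀ u, psiCurv ψ γ u = 0

def signedArea (γ : ℝ → ℝ × ℝ) : ℝ :=
  (1/2) * ∫ u in (0:ℝ)..(2*π), ((γ u).1 * (deriv γ u).2 - (γ u).2 * (deriv γ u).1)

def turningNumber (γ : ℝ → ℝ × ℝ) : ℝ :=
  (1/(2*π)) * ∫ u in (0:ℝ)..(2*π), curvature γ u * nrm2 (deriv γ u)

def windingNumber (γ : ℝ → ℝ × ℝ) : ℝ :=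
  (1/(2*π)) * ∫ u in (0:ℝ)..(2*π),
    ((γ u).1 * (deriv γ u).2 - (γ u).2 * (deriv γ u).1) / (nrm2 (γ u))^2

def hess2 (ψ : ℝ × ℝ → ℝ) (x v : ℝ × ℝ) : ℝ :=
  fderiv ℝ (fun y => fderiv ℝ ψ y v) x v

def SmoothFamily (γ : ℝ → ℝ → ℝ × ℝ) : Prop :=
  ContDiff ℝ (⊤ : ℕ∞) fun p : ℝ × ℝ => γ p.1 p.2

lemma aux_param (F F' : ℝ × ℝ → ℝ) (hF : Continuous F) (hF' : Continuous F')
    (hd : ∀ t u, HasDerivAt (fun τ => F (τ, u)) (F' (t, u)) t) (a b t : ℝ) :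
    HasDerivAt (fun τ => ∫ u in a..b, F (τ, u)) (∫ u in a..b, F' (t, u)) t := by
  have hK : IsCompact (Metric.closedBall t 1 ×ˢ Set.uIcc a b) :=
    (isCompact_closedBall t 1).prod isCompact_uIcc
  obtain ⟨C, hC⟩ := hK.exists_bound_of_continuousOn hF'.continuousOn
  have h1 : ∀ x, Continuous fun u => F (x, u) := fun x => by fun_prop
  have h2 : ∀ x, Continuous fun u => F' (x, u) := fun x => by fun_prop
  refine (intervalIntegral.hasDerivAt_integral_of_dominated_loc_of_deriv_le
    (F := fun x u => F (x, u)) (F' := fun x u => F' (x, u)) (bound := fun _ => C)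
    (Metric.closedBall_mem_nhds t one_pos) ?_ ?_ ?_ ?_ ?_ ?_).2
  · exact Filter.Eventually.of_forall fun x => (h1 x).aestronglyMeasurable
  · exact (h1 t).intervalIntegrable _ _
  · exact (h2 t).aestronglyMeasurable
  · exact Filter.Eventually.of_forall fun u hu x hx => hC (x, u) ⟨hx, Set.uIoc_subset_uIcc hu⟩
  · exact intervalIntegrable_const
  · exact Filter.Eventually.of_forall fun u _ x _ => hd x u

lemma aux_lin {f g h : ℝ → ℝ} (hf : Continuous f) (hg : Continuous g) (hh : Continuous h)
    {p q r a b : ℝ} : (∫ u in a..b, (p * f u + (q * g u + r * h u)))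
      = p * (∫ u in a..b, f u) + (q * (∫ u in a..b, g u) + r * ∫ u in a..b, h u) := by
  have h1 : Continuous fun u => p * f u := by fun_prop
  have h2 : Continuous fun u => q * g u := by fun_prop
  have h3 : Continuous fun u => r * h u := by fun_prop
  have h4 : Continuous fun u => q * g u + r * h u := by fun_prop
  rw [intervalIntegral.integral_add (h1.intervalIntegrable _ _) (h4.intervalIntegrable _ _),
    intervalIntegral.integral_add (h2.intervalIntegrable _ _) (h3.intervalIntegrable _ _)]
  simp only [intervalIntegral.integral_const_mul]

lemma aux_dt {E : Type*} [NormedAddCommGroup E] [NormedSpace ℝ E] (f : ℝ × ℝ → E)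
    (hf : Differentiable ℝ f) (t u : ℝ) :
    HasDerivAt (fun τ => f (τ, u)) (fderiv ℝ f (t, u) (1, 0)) t := by
  have h : HasDerivAt (fun τ : ℝ => (τ, u)) ((1 : ℝ), (0 : ℝ)) t :=
    (hasDerivAt_id t).prodMk (hasDerivAt_const t u)
  exact (hf (t, u)).hasFDerivAt.comp_hasDerivAt t h

lemma aux_du {E : Type*} [NormedAddCommGroup E] [NormedSpace ℝ E] (f : ℝ × ℝ → E)
    (hf : Differentiable ℝ f) (t u : ℝ) :
    HasDerivAt (fun v => f (t, v)) (fderiv ℝ f (t, u) (0, 1)) u := by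
  have h : HasDerivAt (fun v : ℝ => (t, v)) ((0 : ℝ), (1 : ℝ)) u :=
    (hasDerivAt_const u t).prodMk (hasDerivAt_id u)
  exact (hf (t, u)).hasFDerivAt.comp_hasDerivAt u h

lemma aux_fst {f : ℝ → ℝ × ℝ} {v : ℝ × ℝ} {t : ℝ} (h : HasDerivAt f v t) :
    HasDerivAt (fun τ => (f τ).1) v.1 t :=
  (ContinuousLinearMap.fst ℝ ℝ ℝ).hasFDerivAt.comp_hasDerivAt t h

lemma aux_snd {f : ℝ → ℝ × ℝ} {v : ℝ × ℝ} {t : ℝ} (h : HasDerivAt f v t) :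
    HasDerivAt (fun τ => (f τ).2) v.2 t :=
  (ContinuousLinearMap.snd ℝ ℝ ℝ).hasFDerivAt.comp_hasDerivAt t h

lemma aux_det {f g : ℝ → ℝ × ℝ} {v w : ℝ × ℝ} {t : ℝ} (hf : HasDerivAt f v t)
    (hg : HasDerivAt g w t) :
    HasDerivAt (fun τ => (f τ).1 * (g τ).2 - (f τ).2 * (g τ).1)
      (v.1 * (g t).2 - v.2 * (g t).1 + ((f t).1 * w.2 - (f t).2 * w.1)) t := by
  have := ((aux_fst hf).mul (aux_snd hg)).sub ((aux_snd hf).mul (aux_fst hg))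
  refine this.congr_deriv ?_
  ring

lemma sq_pos_of_ne {v : ℝ × ℝ} (h : v ≠ 0) : 0 < v.1 ^ 2 + v.2 ^ 2 := by
  by_contra hc
  apply h
  have h1 : v.1 = 0 := by nlinarith [sq_nonneg v.1, sq_nonneg v.2]
  have h2 : v.2 = 0 := by nlinarith [sq_nonneg v.1, sq_nonneg v.2]
  exact Prod.ext h1 h2

/-- first variation of signed area -/
lemma aux_area (γ : ℝ → ℝ → ℝ × ℝ) (hfam : SmoothFamily γ) (t : ℝ)
    (hper : γ t (2 * π) = γ t 0)
    (hper' : deriv (fun τ => γ τ (2 * π)) t = deriv (fun τ => γ τ 0) t) :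
    Continuous (fun u => (deriv (fun τ => γ τ u) t).1 * (deriv (γ t) u).2
      - (deriv (fun τ => γ τ u) t).2 * (deriv (γ t) u).1) ∧
    HasDerivAt (fun τ => signedArea (γ τ))
      (∫ u in (0:ℝ)..(2*π), ((deriv (fun τ => γ τ u) t).1 * (deriv (γ t) u).2
      - (deriv (fun τ => γ τ u) t).2 * (deriv (γ t) u).1)) t := by
  set G : ℝ × ℝ → ℝ × ℝ := fun p => γ p.1 p.2 with hG
  have hGs : ContDiff ℝ (⊤ : ℕ∞) G := hfam
  have hfd : ContDiff ℝ (⊤ : ℕ∞) (fderiv ℝ G) := hGs.fderiv_right (by simp)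
  have hGd : Differentiable ℝ G := hGs.differentiable (by simp)
  have hfdd : Differentiable ℝ (fderiv ℝ G) := hfd.differentiable (by simp)
  set Gu : ℝ × ℝ → ℝ × ℝ := fun p => fderiv ℝ G p (0, 1) with hGu
  set Gt : ℝ × ℝ → ℝ × ℝ := fun p => fderiv ℝ G p (1, 0) with hGt
  have hGus : ContDiff ℝ (⊤ : ℕ∞) Gu := hfd.clm_apply contDiff_const
  have hGts : ContDiff ℝ (⊤ : ℕ∞) Gt := hfd.clm_apply contDiff_const
  have hGud : Differentiable ℝ Gu := hGus.differentiable (by simp)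
  have hGtd : Differentiable ℝ Gt := hGts.differentiable (by simp)
  set M : ℝ × ℝ → ℝ × ℝ := fun p => fderiv ℝ Gu p (1, 0) with hM
  have hMc : Continuous M := (hGus.continuous_fderiv (by simp)).clm_apply continuous_const
  have hsymm : ∀ p, fderiv ℝ Gt p (0, 1) = M p := by
    intro p
    have hs : IsSymmSndFDerivAt ℝ G p := hGs.contDiffAt.isSymmSndFDerivAt (by
      rw [minSmoothness_of_isRCLikeNormedField]
      exact WithTop.coe_le_coe.2 (le_top : (2 : ℕ∞) ≤ ⊤))
    have e1 : fderiv ℝ Gt p (0, 1) = fderiv ℝ (fderiv ℝ G) p (0, 1) (1, 0) := by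
      rw [hGt, fderiv_clm_apply (hfdd p) (by fun_prop)]
      simp
    have e2 : M p = fderiv ℝ (fderiv ℝ G) p (1, 0) (0, 1) := by
      rw [hM, hGu]
      simp only
      rw [fderiv_clm_apply (hfdd p) (by fun_prop)]
      simp
    rw [e1, e2]
    exact hs _ _
  have eu : ∀ τ u, deriv (γ τ) u = Gu (τ, u) := fun τ u => (aux_du G hGd τ u).deriv
  have et : ∀ u, deriv (fun τ => γ τ u) t = Gt (t, u) := fun u => (aux_dt G hGd t u).deriv
  have hGc := hGd.continuous
  have hGuc := hGud.continuous
  have hGtc := hGtd.continuous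
  simp only [et] at hper' ⊢
  simp only [eu, signedArea]
  have hPc : Continuous (fun u => (Gt (t, u)).1 * (Gu (t, u)).2 - (Gt (t, u)).2 * (Gu (t, u)).1) := by
    fun_prop
  refine ⟨hPc, ?_⟩
  have key := aux_param (fun p => (G p).1 * (Gu p).2 - (G p).2 * (Gu p).1)
    (fun p => (Gt p).1 * (Gu p).2 - (Gt p).2 * (Gu p).1 + ((G p).1 * (M p).2 - (G p).2 * (M p).1))
    (by fun_prop) (by fun_prop)
    (fun t u => aux_det (aux_dt G hGd t u) (aux_dt Gu hGud t u)) 0 (2 * π) t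
  have hq : ∀ u ∈ Set.uIcc 0 (2 * π), HasDerivAt
      (fun v => (G (t, v)).1 * (Gt (t, v)).2 - (G (t, v)).2 * (Gt (t, v)).1)
      ((Gu (t, u)).1 * (Gt (t, u)).2 - (Gu (t, u)).2 * (Gt (t, u)).1
        + ((G (t, u)).1 * (M (t, u)).2 - (G (t, u)).2 * (M (t, u)).1)) u := by
    intro u _
    have := aux_det (aux_du G hGd t u) (aux_du Gt hGtd t u)
    rw [hsymm] at this
    exact this
  have hqc : Continuous fun u => (Gu (t, u)).1 * (Gt (t, u)).2 - (Gu (t, u)).2 * (Gt (t, u)).1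
        + ((G (t, u)).1 * (M (t, u)).2 - (G (t, u)).2 * (M (t, u)).1) := by fun_prop
  have hint := intervalIntegral.integral_eq_sub_of_hasDerivAt hq (hqc.intervalIntegrable _ _)
  have hper2 : G (t, 2 * π) = G (t, 0) := hper
  rw [hper', hper2, sub_self] at hint
  refine (key.const_mul (1/2)).congr_deriv ?_
  have hsplit : (∫ u in (0:ℝ)..(2*π), ((Gt (t, u)).1 * (Gu (t, u)).2 - (Gt (t, u)).2 * (Gu (t, u)).1
        + ((G (t, u)).1 * (M (t, u)).2 - (G (t, u)).2 * (M (t, u)).1)))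
      = ∫ u in (0:ℝ)..(2*π), (2 * ((Gt (t, u)).1 * (Gu (t, u)).2 - (Gt (t, u)).2 * (Gu (t, u)).1)
        + ((Gu (t, u)).1 * (Gt (t, u)).2 - (Gu (t, u)).2 * (Gt (t, u)).1
        + ((G (t, u)).1 * (M (t, u)).2 - (G (t, u)).2 * (M (t, u)).1))) := by
    congr 1
    ext u
    ring
  rw [hsplit, intervalIntegral.integral_add ((hPc.const_mul 2).intervalIntegrable _ _)
    (hqc.intervalIntegrable _ _), hint, intervalIntegral.integral_const_mul]
  ring

lemma aux_psi (lam a : ℝ) (x v : ℝ × ℝ) (hx : x ≠ 0) :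
    fderiv ℝ (fun x => lam * (nrm2 x) ^ 2 / 4 - a * Real.log (nrm2 x)) x v
      = lam / 2 * (x.1 * v.1 + x.2 * v.2) - a * (x.1 * v.1 + x.2 * v.2) / (nrm2 x) ^ 2 := by
  have hpos := sq_pos_of_ne hx
  have e : (fun x => lam * (nrm2 x) ^ 2 / 4 - a * Real.log (nrm2 x))
      = fun x : ℝ × ℝ => lam / 4 * (x.1 ^ 2 + x.2 ^ 2) - a / 2 * Real.log (x.1 ^ 2 + x.2 ^ 2) := by
    ext y
    have : 0 ≤ y.1 ^ 2 + y.2 ^ 2 := by positivity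
    rw [nrm2, Real.sq_sqrt this, Real.log_sqrt this]
    ring
  have e2 : (nrm2 x) ^ 2 = x.1 ^ 2 + x.2 ^ 2 := Real.sq_sqrt hpos.le
  rw [e, e2]
  have h1 : HasFDerivAt (fun y : ℝ × ℝ => y.1) (ContinuousLinearMap.fst ℝ ℝ ℝ) x := hasFDerivAt_fst
  have h2 : HasFDerivAt (fun y : ℝ × ℝ => y.2) (ContinuousLinearMap.snd ℝ ℝ ℝ) x := hasFDerivAt_snd
  have h3 := (h1.pow 2).add (h2.pow 2)
  have h4 := (h3.const_mul (lam / 4)).sub ((h3.log hpos.ne').const_mul (a / 2))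
  have h5 := h4.fderiv
  have h6 := congrArg (fun L : ℝ × ℝ →L[ℝ] ℝ => L v) h5
  refine h6.trans ?_
  have := hpos.ne'
  simp
  field_simp
  ring

/-- evolution of the signed area under ψMCF for
ψ(x) = λ|x|²/4 − a ln|x| on ℝ²∖{0}. -/
theorem area_evolution_lambda_a_density
    (lam a : ℝ) (hlam : 0 < lam)
    (T : ℝ) (hT : 0 < T) (γ : ℝ → ℝ → ℝ × ℝ)
    (hfam : SmoothFamily γ)
    (hclosed : ∀ t ∈ Set.Ico (0:ℝ) T, IsClosedCurve (γ t))
    (havoid : ∀ t ∈ Set.Ico (0:ℝ) T, ∀ u : ℝ, γ t u ≠ 0)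
    (hflow : ∀ t ∈ Set.Ico (0:ℝ) T, ∀ u : ℝ,
      deriv (fun τ => γ τ u) t
        = psiCurv (fun x => lam * (nrm2 x) ^ 2 / 4 - a * Real.log (nrm2 x))
            (γ t) u • normalC (γ t) u)
    (hturn : ∀ t ∈ Set.Ico (0:ℝ) T, turningNumber (γ t) = 1) :
    (∀ t ∈ Set.Ico (0:ℝ) T,
        HasDerivAt (fun τ => signedArea (γ τ))
          (-(2 * π) - lam * signedArea (γ t) + 2 * π * a * windingNumber (γ t)) t)
    ∧ (∀ A₀ : ℝ, (∀ t ∈ Set.Ico (0:ℝ) T, windingNumber (γ t) = 0) →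
        signedArea (γ 0) = A₀ → 0 < A₀ →
        ∀ t ∈ Set.Ico (0:ℝ) T,
          signedArea (γ t) = (A₀ + 2 * π / lam) * Real.exp (-lam * t) - 2 * π / lam
          ∧ (signedArea (γ t) = 0 ↔ t = (1 / lam) * Real.log (1 + lam * A₀ / (2 * π)))) := by
  have main : ∀ t ∈ Set.Ico (0:ℝ) T,
        HasDerivAt (fun τ => signedArea (γ τ))
          (-(2 * π) - lam * signedArea (γ t) + 2 * π * a * windingNumber (γ t)) t := by
    intro t ht
    have hc := hclosed t ht
    have hper : γ t (2 * π) = γ t 0 := by simpa using hc.periodic 0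
    have hdif : ∀ u, DifferentiableAt ℝ (fun τ => γ τ u) t := fun u =>
      (aux_dt (fun p : ℝ × ℝ => γ p.1 p.2)
        (ContDiff.differentiable (n := ((⊤ : ℕ∞) : WithTop ℕ∞)) hfam (by simp)) t u).differentiableAt
    have hper' : deriv (fun τ => γ τ (2 * π)) t = deriv (fun τ => γ τ 0) t := by
      have hu : UniqueDiffWithinAt ℝ (Set.Ico (0:ℝ) T) t := uniqueDiffOn_Ico 0 T t ht
      rw [← (hdif (2 * π)).derivWithin hu, ← (hdif 0).derivWithin hu]
      have hE : ∀ τ ∈ Set.Ico (0:ℝ) T, γ τ (2 * π) = γ τ 0 := fun τ hτ => by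
        simpa using (hclosed τ hτ).periodic 0
      exact derivWithin_congr hE (hE t ht)
    obtain ⟨hPc, hA⟩ := aux_area γ hfam t hper hper'
    refine hA.congr_deriv ?_
    have hγc : Continuous (γ t) := hc.smooth.continuous
    have hγ'c : Continuous (deriv (γ t)) := hc.smooth.continuous_deriv (by simp)
    have hDc : Continuous fun u => (γ t u).1 * (deriv (γ t) u).2 - (γ t u).2 * (deriv (γ t) u).1 := by
      fun_prop
    have hn2 : ∀ u, (nrm2 (γ t u)) ^ 2 = (γ t u).1 ^ 2 + (γ t u).2 ^ 2 := fun u =>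
      Real.sq_sqrt (by positivity)
    have hWc : Continuous fun u => ((γ t u).1 * (deriv (γ t) u).2 - (γ t u).2 * (deriv (γ t) u).1)
        / (nrm2 (γ t u)) ^ 2 := by
      simp only [hn2]
      exact hDc.div (by fun_prop) fun u => (sq_pos_of_ne (havoid t ht u)).ne'
    have hpt : ∀ u, curvature (γ t) u * nrm2 (deriv (γ t) u)
        = (-1) * ((deriv (fun τ => γ τ u) t).1 * (deriv (γ t) u).2
          - (deriv (fun τ => γ τ u) t).2 * (deriv (γ t) u).1)
        + ((-(lam / 2)) * ((γ t u).1 * (deriv (γ t) u).2 - (γ t u).2 * (deriv (γ t) u).1)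
        + a * (((γ t u).1 * (deriv (γ t) u).2 - (γ t u).2 * (deriv (γ t) u).1)
          / (nrm2 (γ t u)) ^ 2)) := by
      intro u
      rw [hflow t ht u, psiCurv, aux_psi lam a _ _ (havoid t ht u), hn2]
      have hx := (sq_pos_of_ne (havoid t ht u)).ne'
      have hv := sq_pos_of_ne (hc.regular u)
      have hnp : 0 < nrm2 (deriv (γ t) u) := Real.sqrt_pos.2 hv
      have hns : (nrm2 (deriv (γ t) u)) ^ 2 = (deriv (γ t) u).1 ^ 2 + (deriv (γ t) u).2 ^ 2 :=
        Real.sq_sqrt hv.le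
      simp only [normalC, Jrot, tangentC, Prod.smul_fst, Prod.smul_snd, smul_eq_mul]
      generalize curvature (γ t) u = k
      generalize nrm2 (deriv (γ t) u) = n at *
      generalize (deriv (γ t) u) = v at *
      generalize γ t u = x at *
      obtain ⟨x1, x2⟩ := x
      obtain ⟨v1, v2⟩ := v
      simp only at *
      have hn0 := hnp.ne'
      have hdet : ∀ κ : ℝ, (-1) * (κ * -(n⁻¹ * v2) * v2 - κ * (n⁻¹ * v1) * v1) = κ * n := by
        intro κ
        field_simp
        linear_combination (-κ) * hns
      rw [hdet]
      field_simp
      ring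
    have hk : (∫ u in (0:ℝ)..(2*π), curvature (γ t) u * nrm2 (deriv (γ t) u)) = 2 * π := by
      have := hturn t ht
      rw [turningNumber] at this
      have hp := Real.pi_pos.ne'
      field_simp at this
      linarith
    have hw : (∫ u in (0:ℝ)..(2*π), ((γ t u).1 * (deriv (γ t) u).2 - (γ t u).2 * (deriv (γ t) u).1)
        / (nrm2 (γ t u)) ^ 2) = 2 * π * windingNumber (γ t) := by
      rw [windingNumber]
      have hp := Real.pi_pos.ne'
      field_simp
    have ha : (∫ u in (0:ℝ)..(2*π), ((γ t u).1 * (deriv (γ t) u).2 - (γ t u).2 * (deriv (γ t) u).1))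
        = 2 * signedArea (γ t) := by
      rw [signedArea]
      ring
    simp only [hpt] at hk
    rw [aux_lin hPc hDc hWc, hw, ha] at hk
    linarith
  refine ⟨main, ?_⟩
  intro A₀ hw hA0 hpos t ht
  have hd : ∀ s ∈ Set.Ico (0:ℝ) T, HasDerivAt
      (fun τ => (signedArea (γ τ) + 2 * π / lam) * Real.exp (lam * τ)) 0 s := by
    intro s hs
    have h1 := (main s hs).add_const (2 * π / lam)
    have h2 : HasDerivAt (fun τ => Real.exp (lam * τ)) (Real.exp (lam * s) * (lam * 1)) s :=
      ((hasDerivAt_id s).const_mul lam).exp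
    refine (h1.mul h2).congr_deriv ?_
    rw [hw s hs]
    field_simp
    ring
  have hsub : ∀ s ∈ Set.Icc (0:ℝ) t, s ∈ Set.Ico (0:ℝ) T := fun s hs =>
    ⟨hs.1, lt_of_le_of_lt hs.2 ht.2⟩
  have hconst := constant_of_has_deriv_right_zero
    (fun s hs => (hd s (hsub s hs)).continuousAt.continuousWithinAt)
    (fun s hs => (hd s (hsub s ⟨hs.1, hs.2.le⟩)).hasDerivWithinAt) t ⟨ht.1, le_rfl⟩
  simp only [mul_zero, Real.exp_zero, mul_one, hA0] at hconst
  have hform : signedArea (γ t) = (A₀ + 2 * π / lam) * Real.exp (-lam * t) - 2 * π / lam := by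
    rw [← hconst, mul_assoc, ← Real.exp_add]
    have : lam * t + -lam * t = 0 := by ring
    rw [this, Real.exp_zero]
    ring
  refine ⟨hform, ?_⟩
  have hpi := Real.pi_pos
  have hB : 0 < 1 + lam * A₀ / (2 * π) := by positivity
  have e1 : A₀ + 2 * π / lam = 2 * π / lam * (1 + lam * A₀ / (2 * π)) := by
    field_simp
    ring
  have hc0 : (2 * π / lam) ≠ 0 := by positivity
  rw [hform, e1]
  have e2 : 2 * π / lam * (1 + lam * A₀ / (2 * π)) * Real.exp (-lam * t) - 2 * π / lam
      = 2 * π / lam * (Real.exp (Real.log (1 + lam * A₀ / (2 * π)) - lam * t) - 1) := by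
    rw [sub_eq_add_neg (Real.log _), Real.exp_add, Real.exp_log hB, neg_mul]
    ring
  rw [e2, mul_eq_zero, or_iff_right hc0, sub_eq_zero, Real.exp_eq_one_iff, sub_eq_zero]
  constructor
  · intro h
    rw [h]
    field_simp
  · intro h
    rw [h]
    field_simp
end
end

section
/- Let a ∈ ℝ and ψ(x) = a − ln|x| on ℝ²∖{0} (the critical radial density). If γ is a closed ψ-minimal plane curve whose image is contained in ℝ²∖{0}, then |γ(u)| is constant in u; that is, the image of γ is contained in a circle centered at the origin. Hence the circles centered at the origin are the only closed ψ-minimal curves for this density. -/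
noncomputable section
open Real Set

lemma aux_pos (v : ℝ × ℝ) (hv : v ≠ 0) : 0 < v.1 ^ 2 + v.2 ^ 2 := by
  by_contra h
  apply hv
  have h1 : v.1 ^ 2 + v.2 ^ 2 ≤ 0 := not_lt.mp h
  have : v.1 = 0 := by nlinarith [sq_nonneg v.1, sq_nonneg v.2]
  have : v.2 = 0 := by nlinarith [sq_nonneg v.1, sq_nonneg v.2]
  ext <;> assumption

lemma aux_fderiv (a : ℝ) (p v : ℝ × ℝ) (hp : p ≠ 0) :
    fderiv ℝ (fun x => a - Real.log (nrm2 x)) p v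
      = - ((p.1 * v.1 + p.2 * v.2) / (p.1 ^ 2 + p.2 ^ 2)) := by
  have hpos := aux_pos p hp
  have hf : (fun x : ℝ × ℝ => a - Real.log (nrm2 x))
      = fun x : ℝ × ℝ => a - (1 / 2) * Real.log (x.1 ^ 2 + x.2 ^ 2) := by
    funext x
    unfold nrm2
    rw [Real.log_sqrt (by positivity)]
    ring
  rw [hf]
  have h1 : HasFDerivAt (fun x : ℝ × ℝ => x.1 ^ 2 + x.2 ^ 2) _ p :=
    ((hasFDerivAt_fst (𝕜 := ℝ) (p := p)).pow 2).add
      ((hasFDerivAt_snd (𝕜 := ℝ) (p := p)).pow 2)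
  have h2 := ((h1.log hpos.ne').const_mul (1 / 2)).const_sub a
  rw [h2.fderiv]
  simp
  field_simp
  ring

lemma aux_min (a : ℝ) (γ : ℝ → ℝ × ℝ) (hγ : IsClosedCurve γ) (havoid : ∀ u, γ u ≠ 0)
    (hmin : IsPsiMinimal (fun x => a - Real.log (nrm2 x)) γ) (u : ℝ) (g2 : ℝ × ℝ)
    (h2 : HasDerivAt (deriv γ) g2 u) :
    ((γ u).1 ^ 2 + (γ u).2 ^ 2) * ((deriv γ u).1 * g2.2 - (deriv γ u).2 * g2.1)
     = ((deriv γ u).1 ^ 2 + (deriv γ u).2 ^ 2)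
        * ((γ u).1 * (deriv γ u).2 - (γ u).2 * (deriv γ u).1) := by
  have hA := aux_pos _ (havoid u)
  have hB := aux_pos _ (hγ.regular u)
  have hm := hmin u
  have hx : HasDerivAt (fun t => (deriv γ t).1) g2.1 u := h2.fst
  have hy : HasDerivAt (fun t => (deriv γ t).2) g2.2 u := h2.snd
  have hn : DifferentiableAt ℝ (fun t => (nrm2 (deriv γ t))⁻¹) u := by
    have := (((hx.pow 2).add (hy.pow 2)).sqrt hB.ne').differentiableAt
    exact DifferentiableAt.inv this (Real.sqrt_pos.mpr hB).ne'
  have hT := (hn.hasDerivAt.smul h2).deriv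
  have hT' : deriv (tangentC γ) u = _ := hT
  unfold psiCurv at hm
  rw [aux_fderiv a _ _ (havoid u)] at hm
  unfold curvature arcDeriv at hm
  rw [hT'] at hm
  have hs : nrm2 (deriv γ u) ^ 2 = (deriv γ u).1 ^ 2 + (deriv γ u).2 ^ 2 :=
    Real.sq_sqrt hB.le
  have hs0 : nrm2 (deriv γ u) ≠ 0 := (Real.sqrt_pos.mpr hB).ne'
  simp only [dot2, normalC, Jrot, tangentC, Prod.fst_add, Prod.snd_add, Prod.smul_fst,
    Prod.smul_snd, smul_eq_mul] at hm
  generalize deriv (fun t => (nrm2 (deriv γ t))⁻¹) u = c at hm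
  generalize nrm2 (deriv γ u) = n at *
  generalize (γ u).1 = x at *
  generalize (γ u).2 = y at *
  generalize (deriv γ u).1 = x1 at *
  generalize (deriv γ u).2 = y1 at *
  rw [← hs]
  field_simp at hm
  linear_combination hm

theorem psiMinimal_critical_is_circle
    (a : ℝ) (γ : ℝ → ℝ × ℝ) (hγ : IsClosedCurve γ) (havoid : ∀ u, γ u ≠ 0)
    (hmin : IsPsiMinimal (fun x => a - Real.log (nrm2 x)) γ) :
    ∃ r : ℝ, 0 < r ∧ ∀ u : ℝ, nrm2 (γ u) = r := by
  have hA := fun u => aux_pos _ (havoid u)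
  have hB := fun u => aux_pos _ (hγ.regular u)
  have hd1 : ∀ u, HasDerivAt γ (deriv γ u) u := fun u =>
    ((contDiff_infty_iff_deriv.mp hγ.smooth).1 u).hasDerivAt
  have hd2 : ∀ u, HasDerivAt (deriv γ) (deriv (deriv γ) u) u := fun u =>
    ((contDiff_infty_iff_deriv.mp (contDiff_infty_iff_deriv.mp hγ.smooth).2).1 u).hasDerivAt
  have hx : ∀ u, HasDerivAt (fun t => (γ t).1) (deriv γ u).1 u := fun u => (hd1 u).fst
  have hy : ∀ u, HasDerivAt (fun t => (γ t).2) (deriv γ u).2 u := fun u => (hd1 u).snd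
  have hx1 : ∀ u, HasDerivAt (fun t => (deriv γ t).1) (deriv (deriv γ) u).1 u :=
    fun u => (hd2 u).fst
  have hy1 : ∀ u, HasDerivAt (fun t => (deriv γ t).2) (deriv (deriv γ) u).2 u :=
    fun u => (hd2 u).snd
  have hAd : ∀ u, HasDerivAt (fun t => (γ t).1 ^ 2 + (γ t).2 ^ 2)
      (2 * ((γ u).1 * (deriv γ u).1 + (γ u).2 * (deriv γ u).2)) u := fun u => by
    refine HasDerivAt.congr_deriv (((hx u).pow 2).add ((hy u).pow 2)) ?_
    simp; ring
  have hBd : ∀ u, HasDerivAt (fun t => (deriv γ t).1 ^ 2 + (deriv γ t).2 ^ 2)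
      (2 * ((deriv γ u).1 * (deriv (deriv γ) u).1
        + (deriv γ u).2 * (deriv (deriv γ) u).2)) u := fun u => by
    refine HasDerivAt.congr_deriv (((hx1 u).pow 2).add ((hy1 u).pow 2)) ?_
    simp; ring
  have hg : ∀ u, HasDerivAt (fun t => ((γ t).1 * (deriv γ t).1 + (γ t).2 * (deriv γ t).2) ^ 2
      / (((γ t).1 ^ 2 + (γ t).2 ^ 2) * ((deriv γ t).1 ^ 2 + (deriv γ t).2 ^ 2))) 0 u := fun u => by
    have h := ((((hx u).mul (hx1 u)).add ((hy u).mul (hy1 u))).pow 2).div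
      ((hAd u).mul (hBd u)) (mul_pos (hA u) (hB u)).ne'
    refine HasDerivAt.congr_deriv h ?_
    rw [div_eq_zero_iff]
    left
    have hm := aux_min a γ hγ havoid hmin u _ (hd2 u)
    simp only [Pi.mul_apply, Pi.add_apply, Pi.pow_apply]
    generalize (γ u).1 = x at *
    generalize (γ u).2 = y at *
    generalize (deriv γ u).1 = x1 at *
    generalize (deriv γ u).2 = y1 at *
    push_cast
    linear_combination (-2 * (x * x1 + y * y1) * (x * y1 - y * x1)) * hm
  have hconst := is_const_of_deriv_eq_zero (fun u => (hg u).differentiableAt)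
    (fun u => (hg u).deriv)
  obtain ⟨c, -, hc⟩ := exists_hasDerivAt_eq_zero (a := 0) (b := 2 * π)
    (f := fun t => (γ t).1 ^ 2 + (γ t).2 ^ 2) (by positivity)
    (fun t _ => (hAd t).continuousAt.continuousWithinAt)
    (by have := hγ.periodic 0
        rw [zero_add] at this
        simp only [this])
    (fun t _ => hAd t)
  have hD : ∀ u, (γ u).1 * (deriv γ u).1 + (γ u).2 * (deriv γ u).2 = 0 := fun u => by
    have h := hconst u c
    have hc' : (γ c).1 * (deriv γ c).1 + (γ c).2 * (deriv γ c).2 = 0 := by linarith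
    simp only [hc'] at h
    rw [zero_pow two_ne_zero, zero_div, div_eq_zero_iff] at h
    rcases h with h | h
    · exact pow_eq_zero_iff two_ne_zero |>.mp h
    · exact absurd h (mul_pos (hA u) (hB u)).ne'
  have hAc := is_const_of_deriv_eq_zero (fun u => (hAd u).differentiableAt)
    (fun u => by rw [(hAd u).deriv, hD u, mul_zero])
  refine ⟨nrm2 (γ 0), Real.sqrt_pos.mpr (hA 0), fun u => ?_⟩
  unfold nrm2
  exact congrArg Real.sqrt (hAc u 0)
end
end

section
/- Let γ: ℝ × (−ε, ε) → ℝ² be a smooth family of closed plane curves with ∂_t γ = f N for a smooth function f(u,t), and let ψ be smooth on an open set containing all the images γ(ℝ, t). Then the ψ-length satisfies d/dt L_ψ(t) = −∫₀^{2π} f · k_ψ · e^{ψ(γ)} |∂_u γ| du. In particular, under ψMCF (where f = k_ψ), d/dt L_ψ(t) = −∫₀^{2π} k_ψ² e^{ψ(γ)} |∂_u γ| du ≤ 0, so the ψ-length is nonincreasing along the flow. -/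
noncomputable section
open Real Set

theorem aux_integral (ε : ℝ) (F : ℝ × ℝ → ℝ)
    (hF : ContDiffOn ℝ 1 F (Ioo (-ε) ε ×ˢ univ)) (F' : ℝ → ℝ → ℝ)
    (hF' : ∀ t ∈ Ioo (-ε) ε, ∀ u, HasDerivAt (fun τ => F (τ, u)) (F' t u) t)
    (t : ℝ) (ht : t ∈ Ioo (-ε) ε) :
    HasDerivAt (fun τ => ∫ u in (0:ℝ)..(2*π), F (τ, u))
      (∫ u in (0:ℝ)..(2*π), F' t u) t := by
  have hO : IsOpen (Ioo (-ε) ε ×ˢ (univ : Set ℝ)) := isOpen_Ioo.prod isOpen_univ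
  have hcont : ContinuousOn (fun p => fderiv ℝ F p (1, 0)) (Ioo (-ε) ε ×ˢ univ) :=
    (hF.continuousOn_fderiv_of_isOpen hO le_rfl).clm_apply continuousOn_const
  have heq : ∀ τ ∈ Ioo (-ε) ε, ∀ u, F' τ u = fderiv ℝ F (τ, u) (1, 0) := by
    intro τ hτ u
    have hd : DifferentiableAt ℝ F (τ, u) :=
      (hF.differentiableOn one_ne_zero).differentiableAt (hO.mem_nhds ⟨hτ, mem_univ _⟩)
    have h1 : HasDerivAt (fun σ : ℝ => (σ, u)) ((1 : ℝ), (0 : ℝ)) τ :=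
      (hasDerivAt_id τ).prodMk (hasDerivAt_const τ u)
    exact (hF' τ hτ u).unique (hd.hasFDerivAt.comp_hasDerivAt τ h1)
  obtain ⟨δ, hδ, hsub⟩ := Metric.nhds_basis_closedBall.mem_iff.1 (isOpen_Ioo.mem_nhds ht)
  have hK : IsCompact (Metric.closedBall t δ ×ˢ Icc (0:ℝ) (2*π)) :=
    (isCompact_closedBall t δ).prod isCompact_Icc
  obtain ⟨C, hC⟩ := hK.exists_bound_of_continuousOn
    (hcont.mono (prod_mono hsub (subset_univ _)))
  have hline : ∀ τ ∈ Ioo (-ε) ε, Continuous (fun u => F (τ, u)) := fun τ hτ =>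
    hF.continuousOn.comp_continuous (by fun_prop) (fun u => ⟨hτ, mem_univ _⟩)
  have hline' : Continuous (fun u => F' t u) := by
    have : Continuous (fun u => fderiv ℝ F (t, u) (1, 0)) :=
      hcont.comp_continuous (by fun_prop) (fun u => ⟨ht, mem_univ _⟩)
    simpa only [← heq t ht] using this
  have hπ : (0:ℝ) ≤ 2 * π := by positivity
  refine (intervalIntegral.hasDerivAt_integral_of_dominated_loc_of_deriv_le
    (F := fun τ u => F (τ, u)) (F' := F') (bound := fun _ => C)
    (Metric.closedBall_mem_nhds t hδ) ?_ ?_ ?_ ?_ ?_ ?_).2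
  · filter_upwards [isOpen_Ioo.mem_nhds ht] with τ hτ
    exact (hline τ hτ).aestronglyMeasurable
  · exact (hline t ht).intervalIntegrable _ _
  · exact hline'.aestronglyMeasurable
  · refine Filter.Eventually.of_forall fun u hu τ hτ => ?_
    rw [uIoc_of_le hπ] at hu
    rw [heq τ (hsub hτ)]
    exact hC (τ, u) ⟨hτ, hu.1.le, hu.2⟩
  · exact intervalIntegrable_const
  · exact Filter.Eventually.of_forall fun u hu τ hτ => hF' τ (hsub hτ) u

theorem slice_fst {E : Type*} [NormedAddCommGroup E] [NormedSpace ℝ E] {H : ℝ × ℝ → E}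
    {H' : ℝ × ℝ →L[ℝ] E} {t u : ℝ} (hd : HasFDerivAt H H' (t, u)) :
    HasDerivAt (fun τ => H (τ, u)) (H' (1, 0)) t :=
  HasFDerivAt.comp_hasDerivAt (l := H) (f := fun τ => (τ, u)) t hd
    ((hasDerivAt_id t).prodMk (hasDerivAt_const t u))

theorem slice_snd {E : Type*} [NormedAddCommGroup E] [NormedSpace ℝ E] {H : ℝ × ℝ → E}
    {H' : ℝ × ℝ →L[ℝ] E} {t u : ℝ} (hd : HasFDerivAt H H' (t, u)) :
    HasDerivAt (fun v => H (t, v)) (H' (0, 1)) u :=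
  HasFDerivAt.comp_hasDerivAt (l := H) (f := fun v => (t, v)) u hd
    ((hasDerivAt_const u t).prodMk (hasDerivAt_id u))

theorem hasDerivAt_clm_const {E F : Type*} [NormedAddCommGroup E] [NormedSpace ℝ E]
    [NormedAddCommGroup F] [NormedSpace ℝ F] {A : ℝ → E →L[ℝ] F} {A' : E →L[ℝ] F} {t : ℝ}
    (h : HasDerivAt A A' t) (v : E) : HasDerivAt (fun τ => A τ v) (A' v) t := by
  simpa using h.clm_apply (hasDerivAt_const t v)

theorem nrm2_sq_pos {v : ℝ × ℝ} (hv : v ≠ 0) : 0 < v.1 ^ 2 + v.2 ^ 2 := by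
  by_contra h
  apply hv
  have h1 : v.1 = 0 := by nlinarith [sq_nonneg v.1, sq_nonneg v.2]
  have h2 : v.2 = 0 := by nlinarith [sq_nonneg v.1, sq_nonneg v.2]
  exact Prod.ext h1 h2

theorem nrm2_pos {v : ℝ × ℝ} (hv : v ≠ 0) : 0 < nrm2 v := Real.sqrt_pos.2 (nrm2_sq_pos hv)

theorem nrm2_contDiffAt {v : ℝ × ℝ} (hv : v ≠ 0) {n : WithTop ℕ∞} : ContDiffAt ℝ n nrm2 v := by
  unfold nrm2
  exact ContDiffAt.sqrt (by fun_prop) (nrm2_sq_pos hv).ne'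

theorem hasDerivAt_nrm2 {g : ℝ → ℝ × ℝ} {w : ℝ × ℝ} {t : ℝ} (hg : HasDerivAt g w t)
    (h0 : g t ≠ 0) :
    HasDerivAt (fun τ => nrm2 (g τ)) (dot2 ((nrm2 (g t))⁻¹ • g t) w) t := by
  have h1 : HasDerivAt (fun τ => (g τ).1) w.1 t := hg.fst
  have h2 : HasDerivAt (fun τ => (g τ).2) w.2 t := hg.snd
  have h : HasDerivAt (fun τ => nrm2 (g τ)) _ t :=
    ((h1.pow 2).add (h2.pow 2)).sqrt (nrm2_sq_pos h0).ne'
  refine h.congr_deriv ?_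
  have hp := nrm2_pos h0
  change _ / (2 * nrm2 (g t)) = _
  simp only [dot2, Prod.smul_fst, Prod.smul_snd, smul_eq_mul]
  field_simp
  norm_num
  try ring

theorem mixed_partial {G : ℝ × ℝ → ℝ × ℝ} (hGs : ContDiff ℝ (⊤ : ℕ∞) G) (t u : ℝ) :
    ∃ W : ℝ × ℝ, HasDerivAt (fun τ => fderiv ℝ G (τ, u) (0, 1)) W t ∧
      HasDerivAt (fun v => fderiv ℝ G (t, v) (1, 0)) W u := by
  have hGd : Differentiable ℝ G := hGs.differentiable (by simp)
  have hdG : ContDiff ℝ (⊤ : ℕ∞) (fderiv ℝ G) := hGs.fderiv_right (by simp)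
  obtain ⟨B, hB⟩ : ∃ B, HasFDerivAt (fderiv ℝ G) B (t, u) :=
    ⟨_, (hdG.differentiable (by simp) (t, u)).hasFDerivAt⟩
  have hsymm : B (1, 0) (0, 1) = B (0, 1) (1, 0) :=
    second_derivative_symmetric (fun y => (hGd y).hasFDerivAt) hB _ _
  have h1 := slice_fst (H := fderiv ℝ G) hB
  have h2 := slice_snd (H := fderiv ℝ G) hB
  refine ⟨B (0, 1) (1, 0), ?_, hasDerivAt_clm_const h2 _⟩
  rw [← hsymm]
  exact hasDerivAt_clm_const h1 _

theorem aux_pointwise (ε : ℝ) (γ : ℝ → ℝ → ℝ × ℝ) (f : ℝ → ℝ → ℝ)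
    (hfam : SmoothFamily γ)
    (hf : ContDiff ℝ (⊤ : ℕ∞) fun p : ℝ × ℝ => f p.1 p.2)
    (t : ℝ) (hreg : ∀ u, deriv (γ t) u ≠ 0)
    (ψ : ℝ × ℝ → ℝ) (u : ℝ)
    (hψ : DifferentiableAt ℝ ψ (γ t u))
    (hflow : ∀ u : ℝ,
      deriv (fun τ => γ τ u) t = f t u • normalC (γ t) u) :
    HasDerivAt (fun τ => Real.exp (ψ (γ τ u)) * nrm2 (deriv (γ τ) u))
      (-(f t u * psiCurv ψ (γ t) u * Real.exp (ψ (γ t u)) * nrm2 (deriv (γ t) u))) t := by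
  set G : ℝ × ℝ → ℝ × ℝ := fun p => γ p.1 p.2 with hG
  have hGs : ContDiff ℝ (⊤ : ℕ∞) G := hfam
  have hGd : Differentiable ℝ G := hGs.differentiable (by simp)
  have hGu : ∀ t u, HasDerivAt (γ t) (fderiv ℝ G (t, u) (0, 1)) u := fun t u =>
    slice_snd (hGd (t, u)).hasFDerivAt
  have hGt : ∀ t u, HasDerivAt (fun τ => γ τ u) (fderiv ℝ G (t, u) (1, 0)) t := fun t u =>
    slice_fst (hGd (t, u)).hasFDerivAt
  have hdG : ContDiff ℝ (⊤ : ℕ∞) (fderiv ℝ G) := hGs.fderiv_right (by simp)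
  obtain ⟨W, hWa, hWb⟩ := mixed_partial hGs t u
  have hW1 : HasDerivAt (fun τ => deriv (γ τ) u) W t := by
    have e : (fun τ => deriv (γ τ) u) = fun τ => fderiv ℝ G (τ, u) (0, 1) :=
      funext fun τ => (hGu τ u).deriv
    rw [e]
    exact hWa
  have hW2 : HasDerivAt (fun v => f t v • normalC (γ t) v) W u := by
    have e : (fun v => f t v • normalC (γ t) v) = fun v => fderiv ℝ G (t, v) (1, 0) :=
      funext fun v => (hflow v).symm.trans (hGt t v).deriv
    rw [e]
    exact hWb
  have hγ' : ContDiff ℝ (⊤ : ℕ∞) (deriv (γ t)) := by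
    have : deriv (γ t) = fun u => fderiv ℝ G (t, u) (0, 1) := by
      ext1 u; exact (hGu t u).deriv
    rw [this]
    have h1 : ContDiff ℝ (⊤ : ℕ∞) fun u : ℝ => (t, u) := contDiff_const.prodMk contDiff_id
    have h2 : ContDiff ℝ (⊤ : ℕ∞) fun u : ℝ => fderiv ℝ G (t, u) := hdG.comp h1
    exact h2.clm_apply contDiff_const
  have hT : DifferentiableAt ℝ (tangentC (γ t)) u := by
    have hd : DifferentiableAt ℝ (deriv (γ t)) u := hγ'.differentiable (by simp) u
    have hn : DifferentiableAt ℝ (fun v => nrm2 (deriv (γ t) v)) u :=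
      (hasDerivAt_nrm2 hd.hasDerivAt (hreg u)).differentiableAt
    exact (hn.inv (nrm2_pos (hreg u)).ne').smul hd
  have hT' := hT.hasDerivAt
  set T' := deriv (tangentC (γ t)) u with hT'def
  have hN : HasDerivAt (normalC (γ t)) (Jrot T') u := by
    have a1 : HasDerivAt (fun v => (tangentC (γ t) v).1) T'.1 u := hT'.fst
    have a2 : HasDerivAt (fun v => (tangentC (γ t) v).2) T'.2 u := hT'.snd
    exact HasDerivAt.prodMk a2.neg a1
  have hfu : DifferentiableAt ℝ (f t) u := by
    have : Differentiable ℝ (fun p : ℝ × ℝ => f p.1 p.2) := hf.differentiable (by simp)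
    exact (slice_snd (this (t, u)).hasFDerivAt).differentiableAt
  have hWe : W = f t u • Jrot T' + deriv (f t) u • normalC (γ t) u :=
    hW2.unique (hfu.hasDerivAt.smul hN)
  have hpos := nrm2_pos (hreg u)
  have hnr := hasDerivAt_nrm2 hW1 (hreg u)
  have hval : dot2 ((nrm2 (deriv (γ t) u))⁻¹ • deriv (γ t) u) W
      = - (f t u * curvature (γ t) u * nrm2 (deriv (γ t) u)) := by
    change dot2 (tangentC (γ t) u) W = _
    rw [hWe]
    simp only [curvature, arcDeriv, ← hT'def, normalC, dot2, Jrot, Prod.fst_add, Prod.snd_add,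
      Prod.smul_fst, Prod.smul_snd, smul_eq_mul]
    field_simp
    ring
  rw [hval] at hnr
  have hγt : HasDerivAt (fun τ => γ τ u) (f t u • normalC (γ t) u) t := by
    rw [← hflow u]; exact (hGt t u).differentiableAt.hasDerivAt
  have hψt : HasDerivAt (fun τ => ψ (γ τ u))
      (fderiv ℝ ψ (γ t u) (f t u • normalC (γ t) u)) t :=
    HasFDerivAt.comp_hasDerivAt t (f := fun τ => γ τ u) hψ.hasFDerivAt hγt
  refine (hψt.exp.mul hnr).congr_deriv ?_
  rw [map_smul, smul_eq_mul, psiCurv]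
  ring

/-- first variation of the ψ-length under a normal variation
∂_t γ = f N; under ψMCF the ψ-length is nonincreasing. -/
theorem psiLength_first_variation
    (ε : ℝ) (hε : 0 < ε) (γ : ℝ → ℝ → ℝ × ℝ) (f : ℝ → ℝ → ℝ)
    (hfam : SmoothFamily γ)
    (hf : ContDiff ℝ (⊤ : ℕ∞) fun p : ℝ × ℝ => f p.1 p.2)
    (hclosed : ∀ t ∈ Set.Ioo (-ε) ε, IsClosedCurve (γ t))
    (ψ : ℝ × ℝ → ℝ) (U : Set (ℝ × ℝ)) (hU : IsOpen U)
    (hψ : ContDiffOn ℝ (⊤ : ℕ∞) ψ U)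
    (him : ∀ t ∈ Set.Ioo (-ε) ε, ∀ u : ℝ, γ t u ∈ U)
    (hflow : ∀ t ∈ Set.Ioo (-ε) ε, ∀ u : ℝ,
      deriv (fun τ => γ τ u) t = f t u • normalC (γ t) u) :
    (∀ t ∈ Set.Ioo (-ε) ε,
      HasDerivAt
        (fun τ => ∫ u in (0:ℝ)..(2*π), Real.exp (ψ (γ τ u)) * nrm2 (deriv (γ τ) u))
        (-∫ u in (0:ℝ)..(2*π),
            f t u * psiCurv ψ (γ t) u * Real.exp (ψ (γ t u)) * nrm2 (deriv (γ t) u)) t)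
    ∧ ((∀ t ∈ Set.Ioo (-ε) ε, ∀ u : ℝ, f t u = psiCurv ψ (γ t) u) →
        (∀ t ∈ Set.Ioo (-ε) ε,
          HasDerivAt
            (fun τ => ∫ u in (0:ℝ)..(2*π), Real.exp (ψ (γ τ u)) * nrm2 (deriv (γ τ) u))
            (-∫ u in (0:ℝ)..(2*π),
                (psiCurv ψ (γ t) u) ^ 2 * Real.exp (ψ (γ t u)) * nrm2 (deriv (γ t) u)) t)
        ∧ AntitoneOn
            (fun τ => ∫ u in (0:ℝ)..(2*π), Real.exp (ψ (γ τ u)) * nrm2 (deriv (γ τ) u))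
            (Set.Ioo (-ε) ε)) := by
  have key : ∀ t ∈ Set.Ioo (-ε) ε,
      HasDerivAt
        (fun τ => ∫ u in (0:ℝ)..(2*π), Real.exp (ψ (γ τ u)) * nrm2 (deriv (γ τ) u))
        (-∫ u in (0:ℝ)..(2*π),
            f t u * psiCurv ψ (γ t) u * Real.exp (ψ (γ t u)) * nrm2 (deriv (γ t) u)) t := by
    intro t ht
    rw [← intervalIntegral.integral_neg]
    refine aux_integral ε
      (fun p => Real.exp (ψ (γ p.1 p.2)) * nrm2 (deriv (γ p.1) p.2)) ?_
      (fun t u => -(f t u * psiCurv ψ (γ t) u * Real.exp (ψ (γ t u)) * nrm2 (deriv (γ t) u)))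
      ?_ t ht
    · rintro ⟨s, u⟩ ⟨hs, -⟩
      apply ContDiffAt.contDiffWithinAt
      have hG : ContDiff ℝ (⊤ : ℕ∞) fun p : ℝ × ℝ => γ p.1 p.2 := hfam
      have hd : (fun p : ℝ × ℝ => deriv (γ p.1) p.2)
          = fun p => fderiv ℝ (fun p : ℝ × ℝ => γ p.1 p.2) p (0, 1) := by
        ext1 p
        have h1 : HasDerivAt (fun σ : ℝ => (p.1, σ)) ((0 : ℝ), (1 : ℝ)) p.2 :=
          (hasDerivAt_const p.2 p.1).prodMk (hasDerivAt_id p.2)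
        exact ((hG.differentiable (by simp) p).hasFDerivAt.comp_hasDerivAt p.2 h1).deriv
      have hGu : ContDiff ℝ 1 (fun p : ℝ × ℝ => deriv (γ p.1) p.2) := by
        rw [hd]
        exact ((hG.fderiv_right (m := (⊤ : ℕ∞)) (by simp)).of_le
          (by exact_mod_cast le_top)).clm_apply contDiff_const
      have hψa : ContDiffAt ℝ 1 ψ (γ s u) :=
        (hψ.contDiffAt (hU.mem_nhds (him s hs u))).of_le (by exact_mod_cast le_top)
      have h1 : ContDiffAt ℝ 1 (fun p : ℝ × ℝ => ψ (γ p.1 p.2)) (s, u) :=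
        ContDiffAt.comp (s, u) (f := fun p : ℝ × ℝ => γ p.1 p.2) hψa
          (hG.contDiffAt.of_le (by exact_mod_cast le_top))
      have h2 : ContDiffAt ℝ 1 (fun p : ℝ × ℝ => nrm2 (deriv (γ p.1) p.2)) (s, u) :=
        ContDiffAt.comp (s, u) (f := fun p : ℝ × ℝ => deriv (γ p.1) p.2)
          (nrm2_contDiffAt ((hclosed s hs).regular u)) hGu.contDiffAt
      exact h1.exp.mul h2
    · intro s hs u
      exact aux_pointwise ε γ f hfam hf s (hclosed s hs).regular ψ u
        ((hψ.contDiffAt (hU.mem_nhds (him s hs u))).differentiableAt (by simp)) (hflow s hs)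
  refine ⟨key, fun hk => ?_⟩
  have key2 : ∀ t ∈ Set.Ioo (-ε) ε,
          HasDerivAt
            (fun τ => ∫ u in (0:ℝ)..(2*π), Real.exp (ψ (γ τ u)) * nrm2 (deriv (γ τ) u))
            (-∫ u in (0:ℝ)..(2*π),
                (psiCurv ψ (γ t) u) ^ 2 * Real.exp (ψ (γ t u)) * nrm2 (deriv (γ t) u)) t := by
    intro t ht
    have := key t ht
    simp only [hk t ht, ← pow_two] at this
    exact this
  refine ⟨key2, ?_⟩
  refine antitoneOn_of_deriv_nonpos (convex_Ioo _ _)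
    (fun t ht => (key2 t ht).continuousAt.continuousWithinAt) ?_ ?_
  · intro t ht
    rw [interior_Ioo] at ht
    exact (key2 t ht).differentiableAt.differentiableWithinAt
  · intro t ht
    rw [interior_Ioo] at ht
    rw [(key2 t ht).deriv, neg_nonpos]
    refine intervalIntegral.integral_nonneg (by positivity) fun u _ => ?_
    exact mul_nonneg (mul_nonneg (sq_nonneg _) (Real.exp_pos _).le) (Real.sqrt_nonneg _)
end
end
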